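/- arXiv:0806.4717 — 3 statements merged into one kernel-verified Lean document; each statement's English description precedes it below -/
import Mathlib

section
/- In a monoid M with elements τ₁,…,τ_{p-1} satisfying τᵢ² = 1 for all i and τᵢτⱼ = τⱼτᵢ whenever |i-j| > 1, the element γ = (τ₁τ₂⋯τ_{p-1})(τ₁τ₂⋯τ_{p-2})⋯(τ₁τ₂)(τ₁) satisfies γ² = 1. -/
section Evacuation

variable {M : Type*} [Monoid M] (τ : ℕ → M)

/-- The product `τ₁ τ₂ ⋯ τₙ`. -/
def ascProd (n : ℕ) : M := ((List.range' 1 n).map τ).prod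

/-- The product `τₙ ⋯ τ₂ τ₁`. -/
def descProd (n : ℕ) : M := ((List.range' 1 n).reverse.map τ).prod

/-- The product `(τ₁ ⋯ τₙ)(τ₁ ⋯ τₙ₋₁) ⋯ (τ₁ τ₂)(τ₁)`. -/
def evacProd (n : ℕ) : M :=
  ((List.range n).reverse.map (fun k => ((List.range' 1 (k + 1)).map τ).prod)).prod

@[simp] theorem ascProd_zero : ascProd τ 0 = 1 := by simp [ascProd]

@[simp] theorem descProd_zero : descProd τ 0 = 1 := by simp [descProd]

@[simp] theorem evacProd_zero : evacProd τ 0 = 1 := by simp [evacProd]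

theorem ascProd_succ (n : ℕ) : ascProd τ (n + 1) = ascProd τ n * τ (n + 1) := by
  simp [ascProd, List.range'_concat, add_comm]

theorem descProd_succ (n : ℕ) : descProd τ (n + 1) = τ (n + 1) * descProd τ n := by
  simp [descProd, List.range'_concat, add_comm]

theorem evacProd_succ (n : ℕ) : evacProd τ (n + 1) = ascProd τ (n + 1) * evacProd τ n := by
  simp [evacProd, ascProd, List.range_succ]

variable {τ}

theorem descProd_mul_ascProd {n : ℕ} (hsq : ∀ i, 1 ≤ i → i ≤ n → τ i * τ i = 1) :
    descProd τ n * ascProd τ n = 1 := by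
  induction n with
  | zero => simp
  | succ n ih =>
    calc descProd τ (n + 1) * ascProd τ (n + 1)
        = τ (n + 1) * (descProd τ n * ascProd τ n) * τ (n + 1) := by
          simp only [descProd_succ, ascProd_succ, mul_assoc]
      _ = 1 := by
          rw [ih fun i h₁ h₂ => hsq i h₁ (by omega), mul_one, hsq _ (by omega) le_rfl]

theorem ascProd_commute {n : ℕ} {x : M} (h : ∀ i, 1 ≤ i → i ≤ n → Commute (τ i) x) :
    Commute (ascProd τ n) x := by
  induction n with
  | zero => simp
  | succ n ih =>
    rw [ascProd_succ]
    exact (ih fun i h₁ h₂ => h i h₁ (by omega)).mul_left (h _ (by omega) le_rfl)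

theorem evacProd_commute {n : ℕ} {x : M} (h : ∀ i, 1 ≤ i → i ≤ n → Commute (τ i) x) :
    Commute (evacProd τ n) x := by
  induction n with
  | zero => simp
  | succ n ih =>
    rw [evacProd_succ]
    exact (ascProd_commute h).mul_left (ih fun i h₁ h₂ => h i h₁ (by omega))

theorem evacProd_succ' {n : ℕ}
    (hcomm : ∀ i j, 1 ≤ i → j ≤ n + 1 → i + 1 < j → Commute (τ i) (τ j)) :
    evacProd τ (n + 1) = evacProd τ n * descProd τ (n + 1) := by
  induction n with
  | zero => simp [evacProd_succ, ascProd_succ, descProd_succ]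
  | succ n ih =>
    have hc : Commute (evacProd τ n) (τ (n + 2)) :=
      evacProd_commute fun i h₁ h₂ => hcomm i _ h₁ le_rfl (by omega)
    calc evacProd τ (n + 2)
        = ascProd τ (n + 1) * τ (n + 2) * (evacProd τ n * descProd τ (n + 1)) := by
          rw [evacProd_succ, ascProd_succ, ih fun i j h₁ h₂ => hcomm i j h₁ (by omega)]
      _ = ascProd τ (n + 1) * (τ (n + 2) * evacProd τ n) * descProd τ (n + 1) := by
          simp only [mul_assoc]
      _ = evacProd τ (n + 1) * descProd τ (n + 2) := by
          rw [← hc.eq, evacProd_succ, descProd_succ τ (n + 1)]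
          simp only [mul_assoc]

theorem evacProd_mul_self {n : ℕ} (hsq : ∀ i, 1 ≤ i → i ≤ n → τ i * τ i = 1)
    (hcomm : ∀ i j, 1 ≤ i → j ≤ n → i + 1 < j → Commute (τ i) (τ j)) :
    evacProd τ n * evacProd τ n = 1 := by
  induction n with
  | zero => simp
  | succ n ih =>
    calc evacProd τ (n + 1) * evacProd τ (n + 1)
        = evacProd τ n * (descProd τ (n + 1) * ascProd τ (n + 1)) * evacProd τ n := by
          nth_rw 1 [evacProd_succ' hcomm]
          rw [evacProd_succ]
          simp only [mul_assoc]
      _ = 1 := by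
          rw [descProd_mul_ascProd hsq, mul_one]
          exact ih (fun i h₁ h₂ => hsq i h₁ (by omega))
            (fun i j h₁ h₂ => hcomm i j h₁ (by omega))

end Evacuation

/-- In a monoid `M` with elements `τ₁, …, τ_{p-1}` satisfying `τᵢ² = 1`
and `τᵢτⱼ = τⱼτᵢ` when `|i - j| > 1`, the element
`γ = (τ₁⋯τ_{p-1})(τ₁⋯τ_{p-2})⋯(τ₁τ₂)(τ₁)` satisfies `γ² = 1`. -/
theorem stmt0 {M : Type*} [Monoid M] (p : ℕ) (hp : 2 ≤ p) (τ : ℕ → M)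
    (hsq : ∀ i, 1 ≤ i → i ≤ p - 1 → τ i * τ i = 1)
    (hcomm : ∀ i j, 1 ≤ i → j ≤ p - 1 → i + 1 < j → τ i * τ j = τ j * τ i)
    (γ : M)
    (hγ : γ = (((List.range (p - 1)).reverse).map
      (fun k => (((List.range' 1 (k + 1)).map τ).prod))).prod) :
    γ * γ = 1 := by
  subst hγ
  exact evacProd_mul_self hsq hcomm
end

section
/- Let P be a finite natural partial order on {1,…,p} (i < j in P implies i < j in ℤ). Then the number of self-evacuating linear extensions of P equals the number of dual P-domino tableaux. -/
open scoped Classical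

/-- The swap operator `τ` (0-based position `i`) with respect to the partial order
relation `le`: swap the entries in positions `i, i+1` if incomparable, else do nothing. -/
noncomputable def tauR {α : Type*} (le : α → α → Prop) (i : ℕ) (l : List α) : List α :=
  if h : i + 1 < l.length then
    if le (l[i]'(Nat.lt_of_succ_lt h)) (l[i + 1]'h) ∨
        le (l[i + 1]'h) (l[i]'(Nat.lt_of_succ_lt h)) then l
    else (l.set i (l[i + 1]'h)).set (i + 1) (l[i]'(Nat.lt_of_succ_lt h))
  else l

/-- Apply a sequence of the operators `τ` (0-based indices), left to right. -/
noncomputable def applyTauR {α : Type*} (le : α → α → Prop) (is : List ℕ) (l : List α) :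
    List α := is.foldl (fun acc i => tauR le i acc) l

/-- Indices (0-based) of the evacuation operator `ε = (τ₁⋯τ_{p-1})(τ₁⋯τ_{p-2})⋯τ₁`. -/
def evacIdxR (p : ℕ) : List ℕ :=
  (((List.range (p - 1)).reverse).map (fun k => List.range (k + 1))).flatten

/-- `l` is a linear extension (as a word) of the poset `(Fin p, le)`. -/
def IsLinExtR {p : ℕ} (le : Fin p → Fin p → Prop) (l : List (Fin p)) : Prop :=
  l.Nodup ∧ (∀ x : Fin p, x ∈ l) ∧
    ∀ i j : Fin l.length, le (l.get i) (l.get j) → l.get i ≠ l.get j → (i : ℕ) < (j : ℕ)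

/-- `s` is an order ideal of the poset `(Fin p, le)`. -/
def IsIdealR {p : ℕ} (le : Fin p → Fin p → Prop) (s : Finset (Fin p)) : Prop :=
  ∀ x y : Fin p, le x y → y ∈ s → x ∈ s

/-- `s` is a two-element chain of the poset `(Fin p, le)`. -/
def IsTwoChainR {p : ℕ} (le : Fin p → Fin p → Prop) (s : Finset (Fin p)) : Prop :=
  ∃ a b : Fin p, a ≠ b ∧ le a b ∧ s = {a, b}

/-- `c` is a dual `P`-domino tableau: a chain `∅ = I₀ ⊂ I₁ ⊂ ⋯ ⊂ I_r = P` of order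
ideals (`r = ⌈p/2⌉`) with `I_i − I_{i-1}` a two-element chain for `2 ≤ i ≤ r`, and
`I₁` a two-element chain if `p` is even, a single element if `p` is odd. -/
def IsDualDomino {p : ℕ} (le : Fin p → Fin p → Prop)
    (c : Fin ((p + 1) / 2 + 1) → Finset (Fin p)) : Prop :=
  c 0 = ∅ ∧ c (Fin.last ((p + 1) / 2)) = Finset.univ ∧
  (∀ i, IsIdealR le (c i)) ∧
  (∀ i : Fin ((p + 1) / 2), c i.castSucc ⊆ c i.succ) ∧
  (∀ i : Fin ((p + 1) / 2), 1 ≤ (i : ℕ) → IsTwoChainR le (c i.succ \ c i.castSucc)) ∧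
  (∀ i : Fin ((p + 1) / 2), (i : ℕ) = 0 →
    if Even p then IsTwoChainR le (c i.succ \ c i.castSucc)
    else ∃ a : Fin p, c i.succ \ c i.castSucc = {a})

/-- The product `t (n-1) * ⋯ * t 0`. -/
def promotionProd {G : Type*} [Group G] (t : ℕ → G) : ℕ → G
  | 0 => 1
  | n + 1 => t n * promotionProd t n

/-- The abstract evacuation element built from the first `n - 1` generators. -/
def evacuationProd {G : Type*} [Group G] (t : ℕ → G) : ℕ → G
  | 0 => 1
  | n + 1 => evacuationProd t n * promotionProd t n

/-- The product `t (n-2) * t (n-4) * ⋯` of pairwise commuting generators. -/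
def alternatingProd {G : Type*} [Group G] (t : ℕ → G) : ℕ → G
  | 0 => 1
  | 1 => 1
  | n + 2 => t n * alternatingProd t n

theorem commute_promotionProd {G : Type*} [Group G] {t : ℕ → G}
    (hc : ∀ i j, i + 1 < j → Commute (t i) (t j)) {n j : ℕ} (h : n < j) :
    Commute (promotionProd t n) (t j) := by
  induction n with
  | zero => exact Commute.one_left _
  | succ n ih => exact (hc n j h).mul_left (ih (by omega))

theorem commute_evacuationProd {G : Type*} [Group G] {t : ℕ → G}
    (hc : ∀ i j, i + 1 < j → Commute (t i) (t j)) {n j : ℕ} (h : n ≤ j) :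
    Commute (evacuationProd t n) (t j) := by
  induction n with
  | zero => exact Commute.one_left _
  | succ n ih => exact (ih (by omega)).mul_left (commute_promotionProd hc h)

theorem evacuationProd_succ' {G : Type*} [Group G] {t : ℕ → G} (ht : ∀ i, t i * t i = 1)
    (hc : ∀ i j, i + 1 < j → Commute (t i) (t j)) (n : ℕ) :
    evacuationProd t (n + 1) = (promotionProd t n)⁻¹ * evacuationProd t n := by
  induction n with
  | zero => simp [evacuationProd, promotionProd]
  | succ n ih =>
    have hn : (t n)⁻¹ = t n := inv_eq_of_mul_eq_one_left (ht n)
    have hcomm := (commute_evacuationProd hc (le_refl n)).eq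
    rw [show evacuationProd t (n + 1 + 1) = evacuationProd t (n + 1) * promotionProd t (n + 1)
      from rfl]
    nth_rw 1 [ih]
    rw [promotionProd, mul_inv_rev, hn, evacuationProd]
    simp only [mul_assoc]
    rw [← mul_assoc (evacuationProd t n), hcomm, mul_assoc]

/-- Evacuation is conjugate to a product of commuting generators. -/
theorem exists_conj_evacuationProd {G : Type*} [Group G] {t : ℕ → G}
    (ht : ∀ i, t i * t i = 1) (hc : ∀ i j, i + 1 < j → Commute (t i) (t j)) :
    ∀ n, ∃ u : G, (∀ j, n ≤ j → Commute u (t j)) ∧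
      evacuationProd t n = u * alternatingProd t n * u⁻¹
  | 0 => ⟨1, fun _ _ => Commute.one_left _, by simp [evacuationProd, alternatingProd]⟩
  | 1 => ⟨1, fun _ _ => Commute.one_left _,
      by simp [evacuationProd, alternatingProd, promotionProd]⟩
  | n + 2 => by
    obtain ⟨u, hu, hE⟩ := exists_conj_evacuationProd ht hc n
    refine ⟨(promotionProd t n)⁻¹ * u, fun j hj => ?_, ?_⟩
    · exact (commute_promotionProd hc (by omega)).inv_left.mul_left (hu j (by omega))
    · have h1 : evacuationProd t (n + 2) =
          (promotionProd t n)⁻¹ * (t n * evacuationProd t n) * promotionProd t n := by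
        rw [evacuationProd, evacuationProd_succ' ht hc, promotionProd,
          ← (commute_evacuationProd hc (le_refl n)).eq]
        simp only [mul_assoc]
      rw [h1, hE, alternatingProd]
      have := (hu n le_rfl).eq
      simp only [mul_assoc, mul_inv_rev, inv_inv]
      rw [← mul_assoc (t n) u, ← this, mul_assoc]

theorem List.exists_eq_append_cons_cons {α : Type*} {l : List α} {i : ℕ}
    (h : i + 1 < l.length) :
    ∃ u a b v, l = u ++ a :: b :: v ∧ u.length = i := by
  refine ⟨l.take i, l[i], l[i + 1], l.drop (i + 2), ?_, by simp; omega⟩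
  rw [← List.drop_eq_getElem_cons, ← List.drop_eq_getElem_cons, List.take_append_drop]

theorem tauR_append {α : Type*} (le : α → α → Prop) (u v : List α) (a b : α) :
    tauR le u.length (u ++ a :: b :: v) =
      if le a b ∨ le b a then u ++ a :: b :: v else u ++ b :: a :: v := by
  have h : u.length + 1 < (u ++ a :: b :: v).length := by simp
  simp [tauR]

theorem tauR_of_length_le {α : Type*} (le : α → α → Prop) {i : ℕ} {l : List α}
    (h : l.length ≤ i + 1) : tauR le i l = l := by
  simp [tauR, Nat.not_lt.mpr h]

theorem length_tauR {α : Type*} (le : α → α → Prop) (i : ℕ) (l : List α) :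
    (tauR le i l).length = l.length := by
  unfold tauR; split_ifs <;> simp

theorem tauR_tauR {α : Type*} (le : α → α → Prop) (i : ℕ) (l : List α) :
    tauR le i (tauR le i l) = l := by
  by_cases h : i + 1 < l.length
  · obtain ⟨u, a, b, v, rfl, rfl⟩ := List.exists_eq_append_cons_cons h
    rw [tauR_append]
    split_ifs with hab
    · rw [tauR_append, if_pos hab]
    · rw [tauR_append, if_neg (by tauto)]
  · rw [tauR_of_length_le le (l := l) (by omega), tauR_of_length_le le (by omega)]

theorem tauR_comm {α : Type*} (le : α → α → Prop) {i j : ℕ} (hij : i + 1 < j) (l : List α) :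
    tauR le i (tauR le j l) = tauR le j (tauR le i l) := by
  by_cases h : j + 1 < l.length
  · obtain ⟨u, a, b, v, rfl, rfl⟩ :=
      List.exists_eq_append_cons_cons (show i + 1 < l.length by omega)
    obtain ⟨w, c, d, x, rfl, hw⟩ :=
      List.exists_eq_append_cons_cons (l := v) (i := j - u.length - 2)
        (by simp at h; omega)
    have key (a b c d : α) : tauR le j (u ++ a :: b :: (w ++ c :: d :: x)) =
        if le c d ∨ le d c then u ++ a :: b :: (w ++ c :: d :: x)
          else u ++ a :: b :: (w ++ d :: c :: x) := by
      have := tauR_append le (u ++ a :: b :: w) x c d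
      have hl : (u ++ a :: b :: w).length = j := by simp; omega
      rw [hl] at this
      simpa using this
    by_cases hcd : le c d ∨ le d c <;> by_cases hab : le a b ∨ le b a <;>
      simp only [key, tauR_append, hcd, hab, if_true, if_false]
  · rw [tauR_of_length_le le (l := l) (by omega),
      tauR_of_length_le le (l := tauR le i l) (by rw [length_tauR]; omega)]

theorem getElem?_tauR_of_ne {α : Type*} (le : α → α → Prop) {i j : ℕ} (l : List α)
    (h : j ≠ i) (h' : j ≠ i + 1) : (tauR le i l)[j]? = l[j]? := by
  unfold tauR
  split_ifs <;> simp [h.symm, h'.symm]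

theorem tauR_eq_self_iff {α : Type*} (le : α → α → Prop) {i : ℕ} {l : List α}
    (hl : l.Nodup) : tauR le i l = l ↔
      ∀ h : i + 1 < l.length, le l[i] l[i + 1] ∨ le l[i + 1] l[i] := by
  by_cases h : i + 1 < l.length
  · obtain ⟨u, a, b, v, rfl, rfl⟩ := List.exists_eq_append_cons_cons h
    have hab : a ≠ b := by
      rintro rfl; simp [List.nodup_append] at hl
    rw [tauR_append]
    split_ifs with hc
    · simpa [List.getElem_append] using hc
    · simp [hc, hab.symm]
  · simp [tauR_of_length_le le (Nat.not_lt.mp h), h]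

theorem isLinExtR_iff {p : ℕ} {le : Fin p → Fin p → Prop} {l : List (Fin p)} :
    IsLinExtR le l ↔ l.Nodup ∧ (∀ x, x ∈ l) ∧ l.Pairwise (fun a b => ¬ le b a) := by
  unfold IsLinExtR
  refine and_congr_right fun hn => and_congr_right fun _ => ?_
  rw [List.pairwise_iff_get]
  constructor
  · intro h i j hij hle
    have := h j i hle (fun he => by
      have := (hn.get_inj_iff).1 he
      omega)
    omega
  · intro h i j hle hne
    by_contra hlt
    rcases (not_lt.mp hlt).lt_or_eq with hlt | he
    · exact h j i hlt hle
    · exact hne (congrArg _ (Fin.ext he.symm))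

theorem IsLinExtR.length_eq {p : ℕ} {le : Fin p → Fin p → Prop} {l : List (Fin p)}
    (h : IsLinExtR le l) : l.length = p := by
  rw [← List.toFinset_card_of_nodup h.1,
    Finset.eq_univ_iff_forall.mpr (fun x => List.mem_toFinset.mpr (h.2.1 x))]
  simp

theorem IsLinExtR.tauR {p : ℕ} {le : Fin p → Fin p → Prop} {l : List (Fin p)}
    (hl : IsLinExtR le l) (i : ℕ) : IsLinExtR le (tauR le i l) := by
  by_cases h : i + 1 < l.length
  · obtain ⟨u, a, b, v, rfl, rfl⟩ := List.exists_eq_append_cons_cons h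
    rw [tauR_append]
    split_ifs with hc
    · exact hl
    · rw [isLinExtR_iff] at hl ⊢
      obtain ⟨h1, h2, h3⟩ := hl
      have hp : (u ++ b :: a :: v).Perm (u ++ a :: b :: v) :=
        (List.Perm.swap a b v).append_left u
      refine ⟨hp.nodup_iff.mpr h1, fun x => hp.mem_iff.mpr (h2 x), ?_⟩
      rw [List.pairwise_append] at h3 ⊢
      simp only [List.pairwise_cons, List.mem_cons] at h3 ⊢
      push Not at hc
      grind
  · rwa [tauR_of_length_le le (by omega)]

/-- The swap operator as a permutation of the linear extensions. -/
noncomputable def tauPerm {p : ℕ} (le : Fin p → Fin p → Prop) (i : ℕ) :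
    Equiv.Perm {l : List (Fin p) // IsLinExtR le l} where
  toFun l := ⟨tauR le i l.1, l.2.tauR i⟩
  invFun l := ⟨tauR le i l.1, l.2.tauR i⟩
  left_inv l := Subtype.ext (tauR_tauR le i l.1)
  right_inv l := Subtype.ext (tauR_tauR le i l.1)

theorem coe_promotionProd_tauPerm {p : ℕ} (le : Fin p → Fin p → Prop) (n : ℕ)
    (l : {l : List (Fin p) // IsLinExtR le l}) :
    (promotionProd (tauPerm le) n l).1 = applyTauR le (List.range n) l.1 := by
  induction n with
  | zero => rfl
  | succ n ih =>
    rw [List.range_succ, applyTauR, List.foldl_append]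
    change tauR le n (promotionProd (tauPerm le) n l).1 = _
    rw [ih]
    rfl

theorem evacIdxR_succ (n : ℕ) : evacIdxR (n + 1) = List.range n ++ evacIdxR n := by
  cases n with
  | zero => rfl
  | succ n => simp [evacIdxR, List.range_succ]

theorem coe_evacuationProd_tauPerm {p : ℕ} (le : Fin p → Fin p → Prop) (n : ℕ)
    (l : {l : List (Fin p) // IsLinExtR le l}) :
    (evacuationProd (tauPerm le) n l).1 = applyTauR le (evacIdxR n) l.1 := by
  induction n generalizing l with
  | zero => rfl
  | succ n ih =>
    rw [evacIdxR_succ, applyTauR, List.foldl_append]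
    change (evacuationProd (tauPerm le) n (promotionProd (tauPerm le) n l)).1 = _
    rw [ih, coe_promotionProd_tauPerm]
    rfl

theorem getElem?_alternatingProd_tauPerm {p : ℕ} (le : Fin p → Fin p → Prop)
    (l : {l : List (Fin p) // IsLinExtR le l}) {j : ℕ} :
    ∀ n, n ≤ j → (alternatingProd (tauPerm le) n l).1[j]? = l.1[j]?
  | 0, _ => rfl
  | 1, _ => rfl
  | n + 2, h => by
    change (tauR le n (alternatingProd (tauPerm le) n l).1)[j]? = _
    rw [getElem?_tauR_of_ne le _ (by omega) (by omega),
      getElem?_alternatingProd_tauPerm le l n (by omega)]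

theorem alternatingProd_tauPerm_eq_self_iff {p : ℕ} (le : Fin p → Fin p → Prop)
    (l : {l : List (Fin p) // IsLinExtR le l}) :
    ∀ n, alternatingProd (tauPerm le) n l = l ↔
      ∀ k, k + 2 ≤ n → k % 2 = n % 2 → tauR le k l.1 = l.1
  | 0 => by simp [alternatingProd]
  | 1 => by simp [alternatingProd]
  | n + 2 => by
    have ih := alternatingProd_tauPerm_eq_self_iff le l n
    have hstep : alternatingProd (tauPerm le) (n + 2) l =
        tauPerm le n (alternatingProd (tauPerm le) n l) := rfl
    rw [hstep]
    constructor
    · intro h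
      have hfix : tauR le n (alternatingProd (tauPerm le) n l).1 =
          (alternatingProd (tauPerm le) n l).1 := by
        set m := alternatingProd (tauPerm le) n l with hm
        have h0 : m.1[n]? = l.1[n]? := getElem?_alternatingProd_tauPerm le l n le_rfl
        have hx : tauR le n m.1 = l.1 := congrArg Subtype.val h
        by_cases hn : n + 1 < m.1.length
        · obtain ⟨u, a, b, v, hu, rfl⟩ := List.exists_eq_append_cons_cons hn
          rw [← hx] at h0
          rw [hu, tauR_append] at h0 ⊢
          split_ifs with hc
          · rfl
          · rw [if_neg hc] at h0
            simp at h0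
            simp [h0]
        · exact tauR_of_length_le le (by omega)
      have hm : alternatingProd (tauPerm le) n l = l :=
        (Subtype.ext hfix.symm).trans h
      intro k hk hk2
      rcases Nat.lt_or_ge n k with h1 | h1
      · omega
      rcases h1.lt_or_eq with h1 | rfl
      · exact ih.mp hm k (by omega) (by omega)
      · rwa [hm] at hfix
    · intro h
      rw [ih.mpr fun k hk hk2 => h k (by omega) (by omega)]
      exact Subtype.ext (h n le_rfl (by omega))

/-- Concatenate the increasing words of the successive differences of `s`. -/
def dominoWord {p : ℕ} (s : ℕ → Finset (Fin p)) : ℕ → List (Fin p)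
  | 0 => []
  | k + 1 => dominoWord s k ++ (s (k + 1) \ s k).sort (· ≤ ·)

/-- The entries of `l` form comparable pairs, counting from the end. -/
def IsDominoWord {p : ℕ} (le : Fin p → Fin p → Prop) (l : List (Fin p)) : Prop :=
  ∀ k (h : k + 1 < l.length), k % 2 = p % 2 → le l[k] l[k + 1]

theorem isDualDomino_iff {p : ℕ} {le : Fin p → Fin p → Prop} (s : ℕ → Finset (Fin p)) :
    IsDualDomino le (fun i => s i) ↔
      s 0 = ∅ ∧ s ((p + 1) / 2) = Finset.univ ∧
      (∀ k ≤ (p + 1) / 2, IsIdealR le (s k)) ∧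
      (∀ k < (p + 1) / 2, s k ⊆ s (k + 1)) ∧
      (∀ k < (p + 1) / 2, 1 ≤ k ∨ Even p → IsTwoChainR le (s (k + 1) \ s k)) ∧
      (¬ Even p → ∃ a, s 1 \ s 0 = {a}) := by
  unfold IsDualDomino
  simp only [Fin.val_zero, Fin.val_last, Fin.val_castSucc, Fin.val_succ]
  constructor
  · rintro ⟨h1, h2, h3, h4, h5, h6⟩
    refine ⟨h1, h2, fun k hk => h3 ⟨k, by omega⟩, fun k hk => h4 ⟨k, hk⟩,
      fun k hk h => ?_, fun h => ?_⟩
    · rcases Nat.eq_zero_or_pos k with rfl | hpos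
      · have := h6 ⟨0, hk⟩ rfl
        rwa [if_pos (by simpa using h)] at this
      · exact h5 ⟨k, hk⟩ hpos
    · have hp : 0 < (p + 1) / 2 := by
        rw [Nat.not_even_iff_odd] at h
        have := h.pos
        omega
      have := h6 ⟨0, hp⟩ rfl
      rwa [if_neg h] at this
  · rintro ⟨h1, h2, h3, h4, h5, h6⟩
    refine ⟨h1, h2, fun i => h3 _ (by omega), fun i => h4 _ i.2,
      fun i hi => h5 _ i.2 (Or.inl hi), fun i hi => ?_⟩
    split_ifs with h
    · exact h5 _ i.2 (Or.inr h)
    · rw [hi]; exact h6 h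

theorem sort_pair {p : ℕ} {a b : Fin p} (h : a < b) :
    ({a, b} : Finset (Fin p)).sort (· ≤ ·) = [a, b] := by
  rw [Finset.sort_insert]
  · simp
  · simp [h.le]
  · simp [h.ne]

theorem dominoWord_mono {p : ℕ} (s : ℕ → Finset (Fin p)) {j k : ℕ} (h : j ≤ k) :
    dominoWord s j <+: dominoWord s k := by
  induction k, h using Nat.le_induction with
  | base => exact List.prefix_rfl
  | succ k _ ih => exact ih.trans (List.prefix_append _ _)

theorem dominoWord_spec {p : ℕ} {le : Fin p → Fin p → Prop}
    (hnat : ∀ i j : Fin p, le i j → i ≤ j) {s : ℕ → Finset (Fin p)}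
    (hs : IsDualDomino le (fun i => s i)) (k : ℕ) (hk : k ≤ (p + 1) / 2) :
    (dominoWord s k).toFinset = s k ∧ (dominoWord s k).Nodup ∧
      (dominoWord s k).length = 2 * k - p % 2 ∧
      (dominoWord s k).Pairwise (fun a b => ¬ le b a) ∧
      IsDominoWord le (dominoWord s k) := by
  obtain ⟨h1, -, h3, h4, h5, h6⟩ := (isDualDomino_iff s).mp hs
  induction k with
  | zero => simp [dominoWord, h1, IsDominoWord]
  | succ k ih =>
    obtain ⟨i1, i2, i3, i4, i5⟩ := ih (by omega)
    have hmem : ∀ x, x ∈ dominoWord s k ↔ x ∈ s k := fun x => by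
      rw [← i1, List.mem_toFinset]
    rw [dominoWord]
    have hnew : ∀ x ∈ (s (k + 1) \ s k).sort (· ≤ ·), x ∉ s k := fun x hx =>
      (Finset.mem_sdiff.mp ((Finset.mem_sort _).mp hx)).2
    refine ⟨?_, ?_, ?_, ?_, ?_⟩
    · rw [List.toFinset_append, i1, Finset.sort_toFinset,
        Finset.union_sdiff_of_subset (h4 k (by omega))]
    · refine i2.append (Finset.sort_nodup _ _) fun x hx hx' => hnew x hx' ((hmem x).mp hx)
    · rw [List.length_append, i3, Finset.length_sort]
      by_cases h : 1 ≤ k ∨ Even p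
      · obtain ⟨a, b, hab, -, he⟩ := h5 k (by omega) h
        rw [he, Finset.card_pair hab]
        rw [Nat.even_iff] at h
        omega
      · push Not at h
        obtain rfl : k = 0 := by omega
        obtain ⟨a, ha⟩ := h6 h.2
        rw [ha]
        have := Nat.not_even_iff.mp h.2
        simp [this]
    · rw [List.pairwise_append]
      refine ⟨i4, ?_, fun x hx y hy hle => hnew y hy (h3 k (by omega) _ _ hle ((hmem x).mp hx))⟩
      refine (Finset.sortedLT_sort _).pairwise.imp fun {a b} hab hle => ?_
      exact absurd (hnat _ _ hle) (not_le.mpr hab)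
    · intro j hj hpar
      by_cases hlt : j + 1 < (dominoWord s k).length
      · rw [List.getElem_append_left (by omega), List.getElem_append_left hlt]
        exact i5 j hlt hpar
      · by_cases h : 1 ≤ k ∨ Even p
        · obtain ⟨a, b, hab, hle, he⟩ := h5 k (by omega) h
          have hsort := sort_pair (lt_of_le_of_ne (hnat _ _ hle) hab)
          rw [← he] at hsort
          simp only [hsort, List.length_append, List.length_cons, List.length_nil] at hj ⊢
          rw [Nat.even_iff] at h
          obtain rfl : j = (dominoWord s k).length := by omega
          simpa [List.getElem_append] using hle
        · push Not at h
          obtain rfl : k = 0 := by omega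
          obtain ⟨a, ha⟩ := h6 h.2
          simp [ha, dominoWord] at hj

theorem exists_take_succ {p : ℕ} {le : Fin p → Fin p → Prop} {l : List (Fin p)}
    (hl : IsLinExtR le l) (hd : IsDominoWord le l) {k : ℕ} (hk : k < (p + 1) / 2)
    (h : 1 ≤ k ∨ Even p) :
    ∃ a b, a ≠ b ∧ le a b ∧
      l.take (2 * (k + 1) - p % 2) = l.take (2 * k - p % 2) ++ [a, b] := by
  have hlen := hl.length_eq
  rw [Nat.even_iff] at h
  obtain ⟨u, a, b, v, rfl, hu⟩ := List.exists_eq_append_cons_cons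
    (show (2 * k - p % 2) + 1 < l.length by omega)
  refine ⟨a, b, ?_, ?_, ?_⟩
  · rintro rfl
    have := hl.1
    simp [List.nodup_append] at this
  · have := hd u.length (by simp) (by omega)
    simpa [List.getElem_append] using this
  · rw [← hu, show 2 * (k + 1) - p % 2 = u.length + 2 by omega, List.take_length_add_append,
      List.take_left']
    · simp
    · rfl

theorem toFinset_append_sdiff {α : Type*} [DecidableEq α] {u v : List α}
    (h : (u ++ v).Nodup) : (u ++ v).toFinset \ u.toFinset = v.toFinset := by
  ext x
  have := List.disjoint_of_nodup_append h
  simp only [List.toFinset_append, Finset.mem_sdiff, Finset.mem_union, List.mem_toFinset]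
  constructor
  · tauto
  · exact fun hx => ⟨Or.inr hx, fun hu => this hu hx⟩

theorem exists_take_one {p : ℕ} {le : Fin p → Fin p → Prop} {l : List (Fin p)}
    (hl : IsLinExtR le l) (h : ¬ Even p) : ∃ a, l.take (2 * 1 - p % 2) = [a] := by
  have hlen := hl.length_eq
  rw [Nat.even_iff] at h
  rw [show 2 * 1 - p % 2 = 1 by omega]
  cases l with
  | nil => simp at hlen; omega
  | cons a l => exact ⟨a, by simp⟩

theorem isDualDomino_take {p : ℕ} {le : Fin p → Fin p → Prop} {l : List (Fin p)}
    (hl : IsLinExtR le l) (hd : IsDominoWord le l) :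
    IsDualDomino le (fun i => (l.take (2 * (i : ℕ) - p % 2)).toFinset) := by
  have hlen := hl.length_eq
  refine (isDualDomino_iff fun k => (l.take (2 * k - p % 2)).toFinset).mpr
    ⟨by simp, ?_, ?_, ?_, ?_, ?_⟩
  · rw [List.take_of_length_le (by omega)]
    exact Finset.eq_univ_iff_forall.mpr fun x => List.mem_toFinset.mpr (hl.2.1 x)
  · intro k _ x y hle hy
    rw [List.mem_toFinset] at hy ⊢
    have hp := (isLinExtR_iff.mp hl).2.2
    have hx := hl.2.1 x
    rw [← List.take_append_drop (2 * k - p % 2) l] at hp hx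
    rcases List.mem_append.mp hx with hx | hx
    · exact hx
    · exact absurd hle ((List.pairwise_append.mp hp).2.2 y hy x hx)
  · intro k _ x hx
    rw [List.mem_toFinset] at hx ⊢
    exact (List.take_prefix_take_left (by omega)).subset hx
  · intro k hk h
    obtain ⟨a, b, hab, hle, he⟩ := exists_take_succ hl hd hk h
    refine ⟨a, b, hab, hle, ?_⟩
    have hn : (l.take (2 * (k + 1) - p % 2)).Nodup := hl.1.sublist (List.take_sublist _ _)
    rw [he] at hn ⊢
    rw [toFinset_append_sdiff hn]
    simp
  · intro h
    obtain ⟨a, ha⟩ := exists_take_one hl h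
    exact ⟨a, by simp [ha]⟩

theorem dominoWord_take {p : ℕ} {le : Fin p → Fin p → Prop}
    (hnat : ∀ i j : Fin p, le i j → i ≤ j) {l : List (Fin p)}
    (hl : IsLinExtR le l) (hd : IsDominoWord le l) {s : ℕ → Finset (Fin p)}
    (hs : ∀ k ≤ (p + 1) / 2, s k = (l.take (2 * k - p % 2)).toFinset)
    {k : ℕ} (hk : k ≤ (p + 1) / 2) : dominoWord s k = l.take (2 * k - p % 2) := by
  induction k with
  | zero => simp [dominoWord]
  | succ k ih =>
    rw [dominoWord, ih (by omega), hs _ hk, hs k (by omega)]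
    by_cases h : 1 ≤ k ∨ Even p
    · obtain ⟨a, b, hab, hle, he⟩ := exists_take_succ hl hd (by omega) h
      have hn : (l.take (2 * (k + 1) - p % 2)).Nodup := hl.1.sublist (List.take_sublist _ _)
      rw [he] at hn ⊢
      rw [toFinset_append_sdiff hn]
      simpa using sort_pair (lt_of_le_of_ne (hnat _ _ hle) hab)
    · push Not at h
      obtain rfl : k = 0 := by omega
      obtain ⟨a, ha⟩ := exists_take_one hl h.2
      simp [ha]

/-- Extend a chain indexed by `Fin (n + 1)` to one indexed by `ℕ`. -/
def extendChain {n : ℕ} {β : Type*} (c : Fin (n + 1) → β) (k : ℕ) : β :=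
  c ⟨min k n, by omega⟩

theorem extendChain_val {n : ℕ} {β : Type*} (c : Fin (n + 1) → β) (i : Fin (n + 1)) :
    extendChain c i = c i :=
  congrArg c (Fin.ext (min_eq_left (by omega)))

theorem isDualDomino_extendChain {p : ℕ} {le : Fin p → Fin p → Prop}
    {c : Fin ((p + 1) / 2 + 1) → Finset (Fin p)} (hc : IsDualDomino le c) :
    IsDualDomino le (fun i => extendChain c i) := by
  simpa only [extendChain_val] using hc

/-- Linear extensions made of comparable pairs correspond to dual domino tableaux. -/
def dominoWordEquiv {p : ℕ} {le : Fin p → Fin p → Prop}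
    (hnat : ∀ i j : Fin p, le i j → i ≤ j) :
    {l : List (Fin p) // IsLinExtR le l ∧ IsDominoWord le l} ≃
      {c : Fin ((p + 1) / 2 + 1) → Finset (Fin p) // IsDualDomino le c} where
  toFun l := ⟨_, isDualDomino_take l.2.1 l.2.2⟩
  invFun c := ⟨dominoWord (extendChain c.1) ((p + 1) / 2), by
    have hc := isDualDomino_extendChain c.2
    obtain ⟨h1, h2, -, h4, h5⟩ := dominoWord_spec hnat hc _ le_rfl
    refine ⟨isLinExtR_iff.mpr ⟨h2, fun x => ?_, h4⟩, h5⟩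
    rw [← List.mem_toFinset, h1, ((isDualDomino_iff _).mp hc).2.1]
    exact Finset.mem_univ x⟩
  left_inv l := by
    refine Subtype.ext ?_
    have hlen := l.2.1.length_eq
    refine (dominoWord_take hnat l.2.1 l.2.2 (fun k hk => ?_) le_rfl).trans
      (List.take_of_length_le (by omega))
    exact extendChain_val _ (⟨k, by omega⟩ : Fin ((p + 1) / 2 + 1))
  right_inv c := by
    refine Subtype.ext (funext fun i => ?_)
    have hi : (i : ℕ) ≤ (p + 1) / 2 := by omega
    obtain ⟨h1, -, h3, -⟩ := dominoWord_spec hnat (isDualDomino_extendChain c.2) i hi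
    have := List.prefix_iff_eq_take.mp (dominoWord_mono (extendChain c.1) hi)
    rw [h3] at this
    change (List.take _ _).toFinset = _
    rw [← this, h1, extendChain_val]

theorem alternatingProd_tauPerm_eq_self_iff_isDominoWord {p : ℕ} {le : Fin p → Fin p → Prop}
    (l : {l : List (Fin p) // IsLinExtR le l}) :
    alternatingProd (tauPerm le) p l = l ↔ IsDominoWord le l.1 := by
  have hlen := l.2.length_eq
  rw [alternatingProd_tauPerm_eq_self_iff]
  simp only [tauR_eq_self_iff le l.2.1]
  constructor
  · intro h k hk hpar
    refine (h k (by omega) hpar hk).resolve_right fun hle => ?_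
    exact (List.pairwise_iff_getElem.mp (isLinExtR_iff.mp l.2).2.2) k (k + 1) _ _
      (Nat.lt_succ_self k) hle
  · exact fun h k _ hpar hk => Or.inl (h k hk hpar)

/-- For a finite natural partial order `P` on `{1,…,p}`, the number of
self-evacuating linear extensions of `P` equals the number of dual `P`-domino tableaux. -/
theorem stmt8 (p : ℕ) (le : Fin p → Fin p → Prop)
    (hrefl : ∀ i, le i i) (hantisymm : ∀ i j, le i j → le j i → i = j)
    (htrans : ∀ i j k, le i j → le j k → le i k)
    (hnat : ∀ i j : Fin p, le i j → i ≤ j) :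
    Nat.card {l : List (Fin p) // IsLinExtR le l ∧ applyTauR le (evacIdxR p) l = l} =
      Nat.card {c : Fin ((p + 1) / 2 + 1) → Finset (Fin p) // IsDualDomino le c} := by
  obtain ⟨u, -, hu⟩ := exists_conj_evacuationProd (t := tauPerm le)
    (fun i => Equiv.ext fun l => Subtype.ext (tauR_tauR le i l.1))
    (fun i j hij => Equiv.ext fun l => Subtype.ext (tauR_comm le hij l.1)) p
  have e₁ : {l : List (Fin p) // IsLinExtR le l ∧ applyTauR le (evacIdxR p) l = l} ≃
      {l : {l : List (Fin p) // IsLinExtR le l} // evacuationProd (tauPerm le) p l = l} :=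
    (Equiv.subtypeSubtypeEquivSubtypeInter _ _).symm.trans
      (Equiv.subtypeEquivRight fun l => by
        rw [← coe_evacuationProd_tauPerm, Subtype.ext_iff])
  have e₂ : {l : {l : List (Fin p) // IsLinExtR le l} // evacuationProd (tauPerm le) p l = l} ≃
      {l : {l : List (Fin p) // IsLinExtR le l} // IsDominoWord le l.1} :=
    u⁻¹.subtypeEquiv fun l => by
      rw [← alternatingProd_tauPerm_eq_self_iff_isDominoWord, hu, Equiv.Perm.mul_apply,
        Equiv.Perm.mul_apply, ← Equiv.Perm.eq_inv_iff_eq]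
  exact Nat.card_congr (e₁.trans (e₂.trans
    ((Equiv.subtypeSubtypeEquivSubtypeInter _ _).trans (dominoWordEquiv hnat))))
end

section
/- Let P be a finite natural partial order on {1,…,p}. Then Σ_{w ∈ ℒ(P)} (−1)^{comaj(w)} equals the number of dual P-domino tableaux, where comaj(w) = Σ_{i ∈ D(w)} (p − i) and D(w) is the descent set of the word w. -/
open scoped Classical

/-- `w` (as the word `w 0, w 1, …, w (p-1)`) is a linear extension of `(Fin p, le)`. -/
def IsLinExtPerm {p : ℕ} (le : Fin p → Fin p → Prop) (w : Equiv.Perm (Fin p)) : Prop :=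
  ∀ i j : Fin p, le (w i) (w j) → w i ≠ w j → i < j

/-- The comajor index `comaj(w) = Σ_{i ∈ D(w)} (p − i)`, where `D(w)` is the set of
(1-based) descents of the word `w 0, …, w (p-1)`. -/
def comajP (p : ℕ) (w : Equiv.Perm (Fin p)) : ℕ :=
  ∑ i : Fin (p - 1),
    if w ⟨i.1 + 1, by have := i.2; omega⟩ < w ⟨i.1, by have := i.2; omega⟩
    then p - (i.1 + 1) else 0

/-- The word `w`, cut into consecutive pairs from its right end, has only pairs that are increasing
in the poset. -/
def IsPaired {p : ℕ} (le : Fin p → Fin p → Prop) (w : Equiv.Perm (Fin p)) : Prop :=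
  ∀ (q : ℕ) (hq : q + 1 < p), (p - q) % 2 = 0 → le (w ⟨q, by omega⟩) (w ⟨q + 1, hq⟩)

/-- The contribution of position `i` to the sign `(-1) ^ comajP p w`. -/
noncomputable def descentSign (p : ℕ) (w : Equiv.Perm (Fin p)) (i : Fin (p - 1)) : ℤ :=
  if (p - i.1) % 2 = 0 ∧ w ⟨i.1 + 1, by have := i.2; omega⟩ < w ⟨i.1, by have := i.2; omega⟩
  then -1 else 1

lemma neg_one_pow_comajP (p : ℕ) (w : Equiv.Perm (Fin p)) :
    (-1 : ℤ) ^ comajP p w = ∏ i, descentSign p w i := by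
  rw [comajP, ← Finset.prod_pow_eq_pow_sum]
  refine Finset.prod_congr rfl fun i _ => ?_
  have hi := i.2
  unfold descentSign
  by_cases h : w ⟨i.1 + 1, by omega⟩ < w ⟨i.1, by omega⟩
  · by_cases hp : (p - i.1) % 2 = 0
    · rw [if_pos h, if_pos ⟨hp, h⟩]
      exact Odd.neg_one_pow (Nat.odd_iff.mpr (by omega))
    · rw [if_pos h, if_neg (fun h' => hp h'.1)]
      exact Even.neg_one_pow (Nat.even_iff.mpr (by omega))
  · rw [if_neg h, if_neg (fun h' => h h'.2), pow_zero]

lemma IsPaired.neg_one_pow_comajP {p : ℕ} {le : Fin p → Fin p → Prop}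
    (hnat : ∀ i j : Fin p, le i j → i ≤ j) {w : Equiv.Perm (Fin p)} (hw : IsPaired le w) :
    (-1 : ℤ) ^ comajP p w = 1 := by
  rw [_root_.neg_one_pow_comajP]
  refine Finset.prod_eq_one fun i _ => if_neg fun h => ?_
  have hi := i.2
  exact absurd (hnat _ _ (hw i.1 (by omega) h.1)) (not_le.mpr h.2)

/-- The word `w` with its entries at positions `q` and `q + 1` exchanged. -/
def swapAt {p : ℕ} (w : Equiv.Perm (Fin p)) (q : ℕ) (hq : q + 1 < p) : Equiv.Perm (Fin p) :=
  w * Equiv.swap ⟨q, by omega⟩ ⟨q + 1, hq⟩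

section swapAt

variable {p : ℕ} (w : Equiv.Perm (Fin p)) (q : ℕ) (hq : q + 1 < p)

lemma swapAt_left : swapAt w q hq ⟨q, by omega⟩ = w ⟨q + 1, hq⟩ := by
  simp [swapAt]

lemma swapAt_right : swapAt w q hq ⟨q + 1, hq⟩ = w ⟨q, by omega⟩ := by
  simp [swapAt]

lemma swapAt_of_ne {k : ℕ} (hk : k < p) (h₀ : k ≠ q) (h₁ : k ≠ q + 1) :
    swapAt w q hq ⟨k, hk⟩ = w ⟨k, hk⟩ := by
  have := Equiv.swap_apply_of_ne_of_ne (a := (⟨q, by omega⟩ : Fin p)) (b := ⟨q + 1, hq⟩)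
    (x := ⟨k, hk⟩) (by simpa using h₀) (by simpa using h₁)
  simp [swapAt, this]

lemma swapAt_swapAt {q' : ℕ} (hq' : q' + 1 < p) (h : q' = q) :
    swapAt (swapAt w q hq) q' hq' = w := by
  subst h
  simp [swapAt, mul_assoc]

lemma swapAt_ne : swapAt w q hq ≠ w := by
  intro h
  have h' := swapAt_left w q hq
  rw [h] at h'
  simpa using w.injective h'

lemma prod_descentSign_swapAt (hpar : (p - q) % 2 = 0) :
    ∏ i, descentSign p (swapAt w q hq) i = -∏ i, descentSign p w i := by
  have hq' : q < p - 1 := by omega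
  rw [← Finset.mul_prod_erase _ _ (Finset.mem_univ (⟨q, hq'⟩ : Fin (p - 1))),
    ← Finset.mul_prod_erase _ (descentSign p w) (Finset.mem_univ (⟨q, hq'⟩ : Fin (p - 1))),
    ← neg_mul]
  congr 1
  · have hne : w ⟨q, by omega⟩ ≠ w ⟨q + 1, hq⟩ := by simp
    simp only [descentSign, hpar, true_and, swapAt_left, swapAt_right]
    rcases lt_or_gt_of_ne hne with h | h
    · rw [if_pos h, if_neg h.not_gt]
    · rw [if_neg h.not_gt, if_pos h, neg_neg]
  · refine Finset.prod_congr rfl fun i hi => ?_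
    have hi' : i.1 ≠ q := fun h => (Finset.mem_erase.mp hi).1 (Fin.ext h)
    have := i.2
    unfold descentSign
    by_cases hp : (p - i.1) % 2 = 0
    · rw [swapAt_of_ne w q hq _ hi' (by omega), swapAt_of_ne w q hq _ (by omega) (by omega)]
    · simp [hp]

lemma IsLinExtPerm.swapAt {w : Equiv.Perm (Fin p)} {le : Fin p → Fin p → Prop}
    (hw : IsLinExtPerm le w) (h : ¬ le (w ⟨q, by omega⟩) (w ⟨q + 1, hq⟩)) :
    IsLinExtPerm le (swapAt w q hq) := by
  intro i j hij hne
  obtain ⟨i, hi⟩ := i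
  obtain ⟨j, hj⟩ := j
  have key : ∀ k (hk : k < p), (k = q ∧ _root_.swapAt w q hq ⟨k, hk⟩ = w ⟨q + 1, hq⟩) ∨
      (k = q + 1 ∧ _root_.swapAt w q hq ⟨k, hk⟩ = w ⟨q, by omega⟩) ∨
      (k ≠ q ∧ k ≠ q + 1 ∧ _root_.swapAt w q hq ⟨k, hk⟩ = w ⟨k, hk⟩) := by
    intro k hk
    by_cases h₀ : k = q
    · subst h₀; exact Or.inl ⟨rfl, swapAt_left ..⟩
    by_cases h₁ : k = q + 1
    · subst h₁; exact Or.inr (Or.inl ⟨rfl, swapAt_right ..⟩)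
    exact Or.inr (Or.inr ⟨h₀, h₁, swapAt_of_ne w q hq hk h₀ h₁⟩)
  rw [Fin.mk_lt_mk]
  rcases key i hi with ⟨a, b⟩ | ⟨a, b⟩ | ⟨a, a', b⟩ <;>
  rcases key j hj with ⟨c, d⟩ | ⟨c, d⟩ | ⟨c, c', d⟩ <;>
  rw [b, d] at hij hne <;>
  first
  | exact absurd rfl hne
  | exact absurd hij h
  | (have hlt := hw _ _ hij hne
     rw [Fin.mk_lt_mk] at hlt
     omega)

end swapAt

/-- Position `q` starts a pair of `w` that is not increasing in the poset. -/
def IsBadPair {p : ℕ} (le : Fin p → Fin p → Prop) (w : Equiv.Perm (Fin p)) (q : ℕ) : Prop :=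
  (p - q) % 2 = 0 ∧ ∃ hq : q + 1 < p, ¬ le (w ⟨q, by omega⟩) (w ⟨q + 1, hq⟩)

lemma exists_isBadPair {p : ℕ} {le : Fin p → Fin p → Prop} {w : Equiv.Perm (Fin p)}
    (h : ¬ IsPaired le w) : ∃ q, IsBadPair le w q := by
  unfold IsPaired at h
  push Not at h
  obtain ⟨q, hq, hpar, hle⟩ := h
  exact ⟨q, hpar, hq, hle⟩

lemma not_isPaired_of_isBadPair {p : ℕ} {le : Fin p → Fin p → Prop} {w : Equiv.Perm (Fin p)}
    {q : ℕ} (h : IsBadPair le w q) : ¬ IsPaired le w :=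
  fun hw => h.2.2 (hw q h.2.1 h.1)

lemma isBadPair_swapAt_iff {p : ℕ} {le : Fin p → Fin p → Prop}
    {w : Equiv.Perm (Fin p)} (hw : IsLinExtPerm le w) {q : ℕ} (h : IsBadPair le w q) (k : ℕ) :
    IsBadPair le (swapAt w q h.2.1) k ↔ IsBadPair le w k := by
  have hq := h.2.1
  by_cases hkq : k = q
  · subst hkq
    refine iff_of_true ⟨h.1, hq, ?_⟩ h
    rw [swapAt_left, swapAt_right]
    intro hle
    have := hw _ _ hle (by simp)
    rw [Fin.mk_lt_mk] at this
    omega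
  · unfold IsBadPair
    refine and_congr_right fun hpar => exists_congr fun hk => not_congr ?_
    have := h.1
    rw [swapAt_of_ne w q hq _ hkq (by omega), swapAt_of_ne w q hq _ (by omega) (by omega)]

lemma sum_not_isPaired {p : ℕ} {le : Fin p → Fin p → Prop} :
    ∑ w ∈ Finset.univ.filter (fun w : Equiv.Perm (Fin p) => IsLinExtPerm le w ∧ ¬ IsPaired le w),
      (-1 : ℤ) ^ comajP p w = 0 := by
  have hbad : ∀ w ∈ Finset.univ.filter
      (fun w : Equiv.Perm (Fin p) => IsLinExtPerm le w ∧ ¬ IsPaired le w),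
      ∃ q, IsBadPair le w q := fun w hw => exists_isBadPair (Finset.mem_filter.mp hw).2.2
  refine Finset.sum_involution
    (fun w hw => swapAt w (Nat.find (hbad w hw)) (Nat.find_spec (hbad w hw)).2.1) ?_ ?_ ?_ ?_
  · intro w hw
    rw [neg_one_pow_comajP, neg_one_pow_comajP,
      prod_descentSign_swapAt _ _ _ (Nat.find_spec (hbad w hw)).1, add_neg_cancel]
  · intro w hw _
    exact swapAt_ne _ _ _
  · intro w hw
    have hs := Nat.find_spec (hbad w hw)
    have hl := (Finset.mem_filter.mp hw).2.1
    refine Finset.mem_filter.mpr ⟨Finset.mem_univ _, hl.swapAt _ _ hs.2.2, ?_⟩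
    exact not_isPaired_of_isBadPair ((isBadPair_swapAt_iff hl hs _).mpr hs)
  · intro w hw
    have hs := Nat.find_spec (hbad w hw)
    have hl := (Finset.mem_filter.mp hw).2.1
    exact swapAt_swapAt _ _ _ _ (Nat.find_congr' (isBadPair_swapAt_iff hl hs _))

/-- The chain of initial segments of the word `w` whose sizes have the parity of `p`
(together with the empty one). -/
def segmentChain {p : ℕ} (w : Equiv.Perm (Fin p)) (i : Fin ((p + 1) / 2 + 1)) : Finset (Fin p) :=
  Finset.univ.filter fun x => (w.symm x : ℕ) < 2 * (i : ℕ) - p % 2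

lemma mem_segmentChain {p : ℕ} {w : Equiv.Perm (Fin p)} {i : Fin ((p + 1) / 2 + 1)} {x : Fin p} :
    x ∈ segmentChain w i ↔ (w.symm x : ℕ) < 2 * (i : ℕ) - p % 2 := by
  simp [segmentChain]

lemma isDualDomino_segmentChain {p : ℕ} {le : Fin p → Fin p → Prop} {w : Equiv.Perm (Fin p)}
    (hw : IsLinExtPerm le w) (hpair : IsPaired le w) : IsDualDomino le (segmentChain w) := by
  have hchain : ∀ i : Fin ((p + 1) / 2), (1 ≤ (i : ℕ) ∨ p % 2 = 0) →
      IsTwoChainR le (segmentChain w i.succ \ segmentChain w i.castSucc) := by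
    intro i hi
    have := i.2
    refine ⟨w ⟨2 * i - p % 2, by omega⟩, w ⟨2 * i - p % 2 + 1, by omega⟩, by simp,
      hpair _ _ (by omega), ?_⟩
    ext x
    simp only [Finset.mem_sdiff, mem_segmentChain, Finset.mem_insert, Finset.mem_singleton,
      ← Equiv.symm_apply_eq, Fin.ext_iff, Fin.val_succ, Fin.val_castSucc]
    omega
  refine ⟨?_, ?_, ?_, ?_, ?_, ?_⟩
  · ext x
    simp [mem_segmentChain]
  · ext x
    have := (w.symm x).2
    simp only [mem_segmentChain, Fin.val_last, Finset.mem_univ, iff_true]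
    omega
  · intro i x y hxy hy
    rw [mem_segmentChain] at hy ⊢
    by_cases h : x = y
    · rwa [h]
    · have := hw (w.symm x) (w.symm y) (by simpa using hxy) (by simpa using h)
      rw [Fin.lt_def] at this
      omega
  · intro i x hx
    rw [mem_segmentChain] at hx ⊢
    simp only [Fin.val_succ, Fin.val_castSucc] at hx ⊢
    omega
  · exact fun i hi => hchain i (Or.inl hi)
  · intro i hi
    have := i.2
    split_ifs with h
    · exact hchain i (Or.inr (Nat.even_iff.mp h))
    · rw [Nat.even_iff] at h
      refine ⟨w ⟨0, by omega⟩, ?_⟩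
      ext x
      simp only [Finset.mem_sdiff, mem_segmentChain, Finset.mem_singleton,
        ← Equiv.symm_apply_eq, Fin.ext_iff, Fin.val_succ, Fin.val_castSucc]
      omega

lemma segmentChain_injective {p : ℕ} {le : Fin p → Fin p → Prop}
    (hantisymm : ∀ i j, le i j → le j i → i = j) {w w' : Equiv.Perm (Fin p)}
    (hw : IsPaired le w) (hw' : IsPaired le w') (h : segmentChain w = segmentChain w') :
    w = w' := by
  have hmem : ∀ (x : Fin p) (i : ℕ), i ≤ (p + 1) / 2 →
      ((w.symm x : ℕ) < 2 * i - p % 2 ↔ (w'.symm x : ℕ) < 2 * i - p % 2) := by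
    intro x i hi
    have := congrArg (x ∈ ·) (congrFun h ⟨i, by omega⟩)
    simpa [mem_segmentChain] using this
  have key : ∀ v v' : Equiv.Perm (Fin p), IsPaired le v → IsPaired le v' →
      (∀ (x : Fin p) (i : ℕ), i ≤ (p + 1) / 2 →
        ((v.symm x : ℕ) < 2 * i - p % 2 ↔ (v'.symm x : ℕ) < 2 * i - p % 2)) →
      ∀ x, ¬ (v.symm x : ℕ) < v'.symm x := by
    intro v v' hv hv' hvv x hlt
    have h₁ := (v.symm x).2
    have h₂ := (v'.symm x).2
    have e₁ := hvv x (((v.symm x : ℕ) + p % 2) / 2) (by omega)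
    have e₂ := hvv x (((v.symm x : ℕ) + p % 2) / 2 + 1) (by omega)
    obtain ⟨q, hq⟩ : ∃ q, q = (v.symm x : ℕ) := ⟨_, rfl⟩
    have hq' : (v'.symm x : ℕ) = q + 1 := by omega
    have hpar : (p - q) % 2 = 0 := by omega
    have hqp : q + 1 < p := by omega
    have hx : v ⟨q, by omega⟩ = x := by
      rw [← Equiv.eq_symm_apply]; exact Fin.ext hq
    have hx' : v' ⟨q + 1, hqp⟩ = x := by
      rw [← Equiv.eq_symm_apply]; exact Fin.ext hq'.symm
    obtain ⟨y, hy⟩ : ∃ y, y = v ⟨q + 1, hqp⟩ := ⟨_, rfl⟩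
    have hysymm : (v.symm y : ℕ) = q + 1 := by simp [hy]
    have hyx : y ≠ x := by rintro rfl; omega
    have f₁ := hvv y (((v.symm x : ℕ) + p % 2) / 2) (by omega)
    have f₂ := hvv y (((v.symm x : ℕ) + p % 2) / 2 + 1) (by omega)
    have hne : (v'.symm y : ℕ) ≠ v'.symm x := fun h' => hyx (v'.symm.injective (Fin.ext h'))
    have hy' : v' ⟨q, by omega⟩ = y := by
      rw [← Equiv.eq_symm_apply]; apply Fin.ext; change q = (v'.symm y : ℕ); omega
    have l₁ := hv q hqp hpar
    have l₂ := hv' q hqp hpar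
    rw [hx, ← hy] at l₁
    rw [hy', hx'] at l₂
    exact hyx (hantisymm _ _ l₂ l₁)
  have hsymm : w.symm = w'.symm := by
    ext x
    have := key w w' hw hw' hmem x
    have := key w' w hw' hw (fun x i hi => (hmem x i hi).symm) x
    omega
  simpa using congrArg Equiv.symm hsymm

lemma exists_segmentChain_eq {p : ℕ} {le : Fin p → Fin p → Prop}
    (hnat : ∀ i j : Fin p, le i j → i ≤ j)
    {c : Fin ((p + 1) / 2 + 1) → Finset (Fin p)} (hc : IsDualDomino le c) :
    ∃ w, (IsLinExtPerm le w ∧ IsPaired le w) ∧ segmentChain w = c := by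
  obtain ⟨hzero, hlast, hideal, hsub, htwo, hfirst⟩ := hc
  have hmono : Monotone c := Fin.monotone_iff_le_succ.mpr hsub
  have hblock : ∀ x : Fin p, ∃ i : Fin ((p + 1) / 2),
      ∀ j : Fin ((p + 1) / 2 + 1), x ∈ c j ↔ (i : ℕ) < j := by
    intro x
    have hex : ∃ n : ℕ, ∃ hn : n < (p + 1) / 2 + 1, x ∈ c ⟨n, hn⟩ :=
      ⟨(p + 1) / 2, by omega, by
        have : x ∈ c (Fin.last ((p + 1) / 2)) := by rw [hlast]; exact Finset.mem_univ _
        exact this⟩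
    obtain ⟨hlt, hmem⟩ := Nat.find_spec hex
    have hpos : Nat.find hex ≠ 0 := by
      intro h0
      have : x ∈ c 0 := by
        have e : (⟨Nat.find hex, hlt⟩ : Fin ((p + 1) / 2 + 1)) = 0 := Fin.ext h0
        rwa [e] at hmem
      rw [hzero] at this
      exact absurd this (Finset.notMem_empty _)
    refine ⟨⟨Nat.find hex - 1, by omega⟩, fun j => ⟨fun hj => ?_, fun hj => ?_⟩⟩
    · have := Nat.find_min' hex ⟨j.2, hj⟩
      change Nat.find hex - 1 < j
      omega
    · change Nat.find hex - 1 < j at hj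
      exact hmono (show (⟨Nat.find hex, hlt⟩ : Fin ((p + 1) / 2 + 1)) ≤ j from by
        rw [Fin.le_def]; change Nat.find hex ≤ j; omega) hmem
  choose b hb using hblock
  have hmemdiff : ∀ x (i : Fin ((p + 1) / 2)), x ∈ c i.succ \ c i.castSucc ↔ b x = i := by
    intro x i
    rw [Finset.mem_sdiff, hb, hb, Fin.ext_iff, Fin.val_succ, Fin.val_castSucc]
    omega
  have hsize : ∀ i : Fin ((p + 1) / 2), (1 ≤ (i : ℕ) ∨ p % 2 = 0) →
      ∃ u v, le u v ∧ u < v ∧ ∀ x, b x = i ↔ x = u ∨ x = v := by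
    intro i hi
    have : IsTwoChainR le (c i.succ \ c i.castSucc) := by
      by_cases h1 : 1 ≤ (i : ℕ)
      · exact htwo i h1
      · have := hfirst i (by omega)
        rwa [if_pos (Nat.even_iff.mpr (by omega))] at this
    obtain ⟨u, v, hne, huv, heq⟩ := this
    refine ⟨u, v, huv, lt_of_le_of_ne (hnat _ _ huv) hne, fun x => ?_⟩
    rw [← hmemdiff, heq]
    simp
  have hsingle : ∀ i : Fin ((p + 1) / 2), ¬ (1 ≤ (i : ℕ) ∨ p % 2 = 0) →
      ∀ x y, b x = i → b y = i → x = y := by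
    intro i hi x y hx hy
    have := hfirst i (by omega)
    rw [if_neg (by rw [Nat.even_iff]; omega)] at this
    obtain ⟨a, ha⟩ := this
    rw [← hmemdiff, ha, Finset.mem_singleton] at hx hy
    rw [hx, hy]
  let pos : Fin p → ℕ := fun x =>
    2 * (b x : ℕ) - p % 2 + if ∃ y, b y = b x ∧ y < x then 1 else 0
  have hpos_single : ∀ x, ¬ (1 ≤ (b x : ℕ) ∨ p % 2 = 0) → pos x = 0 := by
    intro x hx
    have : ¬ ∃ y, b y = b x ∧ y < x := by
      rintro ⟨y, hy, hlt⟩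
      exact hlt.ne (hsingle _ hx y x hy rfl)
    simp only [pos, if_neg this]
    omega
  have hpos_le : ∀ x, 2 * (b x : ℕ) - p % 2 ≤ pos x := fun x => Nat.le_add_right _ _
  have hpos_lt : ∀ x, pos x < 2 * ((b x : ℕ) + 1) - p % 2 := by
    intro x
    by_cases hx : 1 ≤ (b x : ℕ) ∨ p % 2 = 0
    · have : (if ∃ y, b y = b x ∧ y < x then 1 else 0) ≤ 1 := by split_ifs <;> omega
      simp only [pos]
      omega
    · rw [hpos_single x hx]
      omega
  have hpos_bound : ∀ x, pos x < p := by
    intro x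
    have := hpos_lt x
    have := (b x).2
    omega
  have hpos_strict : ∀ x y, b x = b y → x < y → pos x < pos y := by
    intro x y hxy hlt
    by_cases hx : 1 ≤ (b y : ℕ) ∨ p % 2 = 0
    · obtain ⟨u, v, -, huv, hbl⟩ := hsize (b y) hx
      have hx' := (hbl x).mp hxy
      have hy' := (hbl y).mp rfl
      have h₁ : ¬ ∃ z, b z = b x ∧ z < x := by
        rintro ⟨z, hz, hzx⟩
        have hz' := (hbl z).mp (hz.trans hxy)
        grind
      have h₂ : ∃ z, b z = b y ∧ z < y := ⟨x, hxy, hlt⟩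
      have hpx : pos x = 2 * (b x : ℕ) - p % 2 + 0 := by simp only [pos, if_neg h₁]
      have hpy : pos y = 2 * (b y : ℕ) - p % 2 + 1 := by simp only [pos, if_pos h₂]
      rw [hpx, hpy, hxy]
      omega
    · exact absurd (hsingle _ hx x y hxy rfl) hlt.ne
  have hpos_block : ∀ x (i : ℕ), pos x < 2 * i - p % 2 ↔ (b x : ℕ) < i := by
    intro x i
    have := hpos_lt x
    have := hpos_le x
    omega
  have hpos_inj : Function.Injective fun x => (⟨pos x, hpos_bound x⟩ : Fin p) := by
    intro x y hxy
    have hxy : pos x = pos y := congrArg Fin.val hxy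
    have hbxy : b x = b y := by
      have h₁ := hpos_block x
      have h₂ := hpos_block y
      rw [hxy] at h₁
      apply Fin.ext
      have := (h₁ (b y + 1)).symm.trans (h₂ (b y + 1))
      have := (h₁ (b x + 1)).symm.trans (h₂ (b x + 1))
      omega
    rcases lt_trichotomy x y with h | h | h
    · exact absurd hxy (hpos_strict x y hbxy h).ne
    · exact h
    · exact absurd hxy (hpos_strict y x hbxy.symm h).ne'
  let e : Equiv.Perm (Fin p) := Equiv.ofBijective _ (Finite.injective_iff_bijective.mp hpos_inj)
  have he : ∀ x, (e x : ℕ) = pos x := fun x => rfl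
  have hlin : ∀ x y, le x y → x ≠ y → pos x < pos y := by
    intro x y hxy hne
    have hle : (b x : ℕ) ≤ b y := by
      have := hideal (b y).succ x y hxy ((hb _ _).mpr (by simp))
      rw [hb, Fin.val_succ] at this
      omega
    rcases hle.lt_or_eq with h | h
    · exact ((hpos_block x (b y)).mpr h).trans_le (hpos_le y)
    · exact hpos_strict x y (Fin.ext h) (lt_of_le_of_ne (hnat _ _ hxy) hne)
  refine ⟨e.symm, ⟨?_, ?_⟩, ?_⟩
  · intro i j hij hne
    have := hlin _ _ hij hne
    rwa [← he, ← he, e.apply_symm_apply, e.apply_symm_apply] at this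
  · intro q hq hpar
    obtain ⟨x, hx⟩ : ∃ x, x = e.symm ⟨q, by omega⟩ := ⟨_, rfl⟩
    obtain ⟨y, hy⟩ : ∃ y, y = e.symm ⟨q + 1, hq⟩ := ⟨_, rfl⟩
    have hpx : pos x = q := by rw [← he, hx, e.apply_symm_apply]
    have hpy : pos y = q + 1 := by rw [← he, hy, e.apply_symm_apply]
    rw [← hx, ← hy]
    have hlx := hpos_lt x
    have hly := hpos_lt y
    have hlx' := hpos_le x
    have hly' := hpos_le y
    have hbxy : b x = b y := Fin.ext (by omega)
    obtain ⟨u, v, huv, -, hbl⟩ := hsize (b y) (by omega)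
    have hpuv := hlin u v huv
    rcases (hbl x).mp hbxy with h₁ | h₁ <;> rcases (hbl y).mp rfl with h₂ | h₂ <;> subst h₁ h₂
    · omega
    · exact huv
    · have := hpuv (by rintro rfl; omega)
      omega
    · omega
  · funext i
    ext x
    rw [mem_segmentChain, Equiv.symm_symm, he, hpos_block, hb]

/-- For a finite natural partial order `P` on `{1,…,p}`,
`Σ_{w ∈ ℒ(P)} (−1)^{comaj(w)}` equals the number of dual `P`-domino tableaux. -/
theorem stmt9 (p : ℕ) (le : Fin p → Fin p → Prop)
    (hrefl : ∀ i, le i i) (hantisymm : ∀ i j, le i j → le j i → i = j)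
    (htrans : ∀ i j k, le i j → le j k → le i k)
    (hnat : ∀ i j : Fin p, le i j → i ≤ j) :
    ∑ w ∈ Finset.univ.filter (fun w : Equiv.Perm (Fin p) => IsLinExtPerm le w),
        ((-1 : ℤ) ^ comajP p w) =
      (Nat.card {c : Fin ((p + 1) / 2 + 1) → Finset (Fin p) // IsDualDomino le c} : ℤ) := by
  rw [← Finset.sum_filter_add_sum_filter_not _ (fun w => IsPaired le w), Finset.filter_filter,
    Finset.filter_filter, sum_not_isPaired, add_zero,
    Finset.sum_congr rfl fun w hw =>
      (Finset.mem_filter.mp hw).2.2.neg_one_pow_comajP hnat]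
  rw [Finset.sum_const, nsmul_eq_mul, mul_one, ← Fintype.card_subtype, ← Nat.card_eq_fintype_card]
  congr 1
  refine Nat.card_congr (Equiv.ofBijective
    (fun w => ⟨segmentChain w.1, isDualDomino_segmentChain w.2.1 w.2.2⟩) ⟨?_, ?_⟩)
  · intro w w' h
    exact Subtype.ext
      (segmentChain_injective hantisymm w.2.2 w'.2.2 (congrArg Subtype.val h))
  · rintro ⟨c, hc⟩
    obtain ⟨w, hw, rfl⟩ := exists_segmentChain_eq hnat hc
    exact ⟨⟨w, hw⟩, rfl⟩
end
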